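/- The radial function a satisfies a(0) = −8640 i/π, a(√2) = 0, and the derivative of the radial profile satisfies a′(√2) = 72√2 · i/π. -/

import Mathlib

open MeasureTheory

/-- Weight 2 Eisenstein series (quasimodular), via its `q`-expansion. -/
noncomputable def E2 (z : ℂ) : ℂ :=
  1 - 24 * ∑' n : ℕ+, ((ArithmeticFunction.sigma 1 n : ℕ) : ℂ) *
    Complex.exp (2 * (Real.pi : ℂ) * Complex.I * n * z)

/-- Weight 4 Eisenstein series, via its `q`-expansion. -/
noncomputable def E4 (z : ℂ) : ℂ :=
  1 + 240 * ∑' n : ℕ+, ((ArithmeticFunction.sigma 3 n : ℕ) : ℂ) *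
    Complex.exp (2 * (Real.pi : ℂ) * Complex.I * n * z)

/-- Weight 6 Eisenstein series, via its `q`-expansion. -/
noncomputable def E6 (z : ℂ) : ℂ :=
  1 - 504 * ∑' n : ℕ+, ((ArithmeticFunction.sigma 5 n : ℕ) : ℂ) *
    Complex.exp (2 * (Real.pi : ℂ) * Complex.I * n * z)

/-- The elliptic `j`-invariant. -/
noncomputable def jInv (z : ℂ) : ℂ := 1728 * E4 z ^ 3 / (E4 z ^ 3 - E6 z ^ 2)

/-- The weakly holomorphic modular form `varphi_{-2}`. -/
noncomputable def varphim2 (z : ℂ) : ℂ := -1728 * E4 z * E6 z / (E4 z ^ 3 - E6 z ^ 2)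

/-- The weakly holomorphic modular form `varphi_{-4}`. -/
noncomputable def varphim4 (z : ℂ) : ℂ := 1728 * E4 z ^ 2 / (E4 z ^ 3 - E6 z ^ 2)

/-- `φ_{-4} = varphi_{-4}`. -/
noncomputable def phim4 (z : ℂ) : ℂ := varphim4 z

/-- `φ_{-2} = varphi_{-4}·E2 + varphi_{-2}`. -/
noncomputable def phim2 (z : ℂ) : ℂ := varphim4 z * E2 z + varphim2 z

/-- `φ_0 = varphi_{-4}·E2² + 2·varphi_{-2}·E2 + j − 1728`. -/
noncomputable def phi0 (z : ℂ) : ℂ :=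
  varphim4 z * E2 z ^ 2 + 2 * varphim2 z * E2 z + jInv z - 1728
/-- Contour integral of `F` along the straight-line segment from `z₁` to `z₂`. -/
noncomputable def segInt (z₁ z₂ : ℂ) (F : ℂ → ℂ) : ℂ :=
  (z₂ - z₁) * ∫ t in (0:ℝ)..1, F (z₁ + (t : ℂ) * (z₂ - z₁))

/-- Contour integral of `F` along the vertical ray from `c·i` to `i∞`. -/
noncomputable def rayIntFrom (c : ℝ) (F : ℂ → ℂ) : ℂ :=
  Complex.I * ∫ t in Set.Ioi c, F (Complex.I * (t : ℂ))
/-- The radial profile of the `+1`-eigenfunction `a`: the value of `a` on vectors of norm `r`. -/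
noncomputable def aRad (r : ℝ) : ℂ :=
  segInt (-1) Complex.I
      (fun z => phi0 (-1/(z+1)) * (z+1)^2 * Complex.exp ((Real.pi:ℂ) * Complex.I * (r:ℂ)^2 * z))
    + segInt 1 Complex.I
      (fun z => phi0 (-1/(z-1)) * (z-1)^2 * Complex.exp ((Real.pi:ℂ) * Complex.I * (r:ℂ)^2 * z))
    - 2 * segInt 0 Complex.I
      (fun z => phi0 (-1/z) * z^2 * Complex.exp ((Real.pi:ℂ) * Complex.I * (r:ℂ)^2 * z))
    + 2 * rayIntFrom 1 (fun z => phi0 z * Complex.exp ((Real.pi:ℂ) * Complex.I * (r:ℂ)^2 * z))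

/-- The radial function `a : ℝ⁸ → ℂ`. -/
noncomputable def aFn (x : EuclideanSpace ℝ (Fin 8)) : ℂ := aRad ‖x‖

/-!
Write `f(w) = φ₀(-1/w) w²`. The three finite segments, translated to start at `0`, lie in the cone
`|re w| ≤ im w`, on which `f` is holomorphic up to the apex; so for an entire weight `g` the
functions `f(w) g(w)` and `f(w) g(w ± 1)` have primitives there. The transformation laws of `E₂`,
`E₄`, `E₆` give `f(z + 1) - 2 f(z) + f(z - 1) = 2 φ₀(z)`, and the weights `1`, `e^{2πiz}` and
`z e^{2πiz}`, which correspond to `a(0)`, `a(√2)` and `a′(√2)`, satisfy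
`g(z + 1) - 2 g(z) + g(z - 1) = 0`. Hence the values at `i` of the primitives cancel, and the whole
contour integral is the limit of `f(w) g(w - 1) - f(w - 1) g(w)` as `w → i∞` in the strip
`0 ≤ re w ≤ 1`, which the leading `q`-coefficients of `φ₀`, `φ₋₂` and `φ₋₄` determine.
-/

section

open Complex Filter Function Set Asymptotics
open UpperHalfPlane (upperHalfPlaneSet isOpen_upperHalfPlaneSet)
open scoped Real Topology UpperHalfPlane MatrixGroups ArithmeticFunction.sigma

local notation "𝕢" => Function.Periodic.qParam 1
local notation "I∞" => comap Complex.im atTop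

/-! ### Eisenstein series as power series in the nome -/

/-- The divisor-sum power series `∑ σ_k(n + 1) qⁿ`; the index is shifted so that its value at the
cusp `q = 0` is `1`. -/
noncomputable def sigmaSeries (k : ℕ) (q : ℂ) : ℂ :=
  ∑' n : ℕ, (σ k (n + 1) : ℂ) * q ^ n

lemma summable_sigma_mul_pow (k : ℕ) {r : ℝ} (h0 : 0 < r) (h1 : r < 1) :
    Summable fun n : ℕ ↦ (σ k (n + 1) : ℝ) * r ^ n := by
  have hpow : Summable fun n : ℕ ↦ (n : ℝ) ^ (k + 1) * r ^ n :=
    summable_pow_mul_geometric_of_norm_lt_one _ (by rwa [Real.norm_of_nonneg h0.le])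
  refine Summable.of_nonneg_of_le (fun n ↦ by positivity) (fun n ↦ ?_)
    (((summable_nat_add_iff 1).mpr hpow).mul_right r⁻¹)
  calc (σ k (n + 1) : ℝ) * r ^ n ≤ ((n + 1 : ℕ) : ℝ) ^ (k + 1) * r ^ n := by
        gcongr
        exact_mod_cast ArithmeticFunction.sigma_le_pow_succ k (n + 1)
    _ = ((n + 1 : ℕ) : ℝ) ^ (k + 1) * r ^ (n + 1) * r⁻¹ := by
        rw [pow_succ r, ← mul_assoc, mul_inv_cancel_right₀ h0.ne']

lemma differentiableOn_sigmaSeries (k : ℕ) :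
    DifferentiableOn ℂ (sigmaSeries k) (Metric.ball 0 1) := by
  intro q hq
  obtain ⟨r, hqr, hr1⟩ := exists_between (mem_ball_zero_iff.mp hq)
  have hr : DifferentiableOn ℂ (sigmaSeries k) (Metric.ball 0 r) := by
    refine differentiableOn_tsum_of_summable_norm
      (summable_sigma_mul_pow k ((norm_nonneg q).trans_lt hqr) hr1) (fun n ↦ by fun_prop)
      Metric.isOpen_ball fun n w hw ↦ ?_
    rw [norm_mul, norm_pow, norm_natCast]
    gcongr
    exact (mem_ball_zero_iff.mp hw).le
  exact (hr.differentiableAt (Metric.isOpen_ball.mem_nhds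
    (mem_ball_zero_iff.mpr hqr))).differentiableWithinAt

lemma sigmaSeries_zero (k : ℕ) : sigmaSeries k 0 = 1 := by
  rw [sigmaSeries, tsum_eq_single 0 fun n hn ↦ by simp [hn]]
  simp

lemma tsum_sigma_mul_cexp (k : ℕ) (z : ℂ) :
    ∑' n : ℕ+, ((σ k n : ℕ) : ℂ) * cexp (2 * (π : ℂ) * I * n * z) =
      𝕢 z * sigmaSeries k (𝕢 z) := by
  rw [tsum_pnat_eq_tsum_succ (f := fun n : ℕ ↦ ((σ k n : ℕ) : ℂ) * cexp (2 * (π : ℂ) * I * n * z)),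
    sigmaSeries, ← tsum_mul_left]
  refine tsum_congr fun n ↦ ?_
  rw [mul_left_comm, ← pow_succ', Periodic.qParam, ← exp_nat_mul]
  congr 2
  push_cast
  ring

lemma E2_eq_sigmaSeries (z : ℂ) : E2 z = 1 - 24 * (𝕢 z * sigmaSeries 1 (𝕢 z)) := by
  rw [E2, tsum_sigma_mul_cexp]

lemma E4_eq_sigmaSeries (z : ℂ) : E4 z = 1 + 240 * (𝕢 z * sigmaSeries 3 (𝕢 z)) := by
  rw [E4, tsum_sigma_mul_cexp]

lemma E6_eq_sigmaSeries (z : ℂ) : E6 z = 1 - 504 * (𝕢 z * sigmaSeries 5 (𝕢 z)) := by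
  rw [E6, tsum_sigma_mul_cexp]

lemma periodic_qParam_one : Periodic 𝕢 1 := fun z ↦ by
  simp [Periodic.qParam, mul_add, Complex.exp_add]

lemma periodic_E2 : Periodic E2 1 := fun z ↦ by
  simp only [E2_eq_sigmaSeries, periodic_qParam_one z]

lemma periodic_E4 : Periodic E4 1 := fun z ↦ by
  simp only [E4_eq_sigmaSeries, periodic_qParam_one z]

lemma periodic_E6 : Periodic E6 1 := fun z ↦ by
  simp only [E6_eq_sigmaSeries, periodic_qParam_one z]

lemma periodic_phi0 : Periodic phi0 1 := fun z ↦ by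
  simp only [phi0, varphim4, varphim2, jInv, periodic_E2 z, periodic_E4 z, periodic_E6 z]

lemma periodic_phim2 : Periodic phim2 1 := fun z ↦ by
  simp only [phim2, varphim4, varphim2, periodic_E2 z, periodic_E4 z, periodic_E6 z]

lemma periodic_phim4 : Periodic phim4 1 := fun z ↦ by
  simp only [phim4, varphim4, periodic_E4 z, periodic_E6 z]

lemma differentiableOn_qParam_mul_sigmaSeries (k : ℕ) :
    DifferentiableOn ℂ (fun z ↦ 𝕢 z * sigmaSeries k (𝕢 z)) upperHalfPlaneSet := by
  have hq : DifferentiableOn ℂ 𝕢 upperHalfPlaneSet :=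
    Periodic.differentiable_qParam.differentiableOn
  exact hq.mul ((differentiableOn_sigmaSeries k).comp hq fun z hz ↦
    mem_ball_zero_iff.mpr (Periodic.norm_qParam_lt_one one_pos hz))

lemma differentiableOn_E2 : DifferentiableOn ℂ E2 upperHalfPlaneSet := by
  rw [funext E2_eq_sigmaSeries]
  exact ((differentiableOn_qParam_mul_sigmaSeries 1).const_mul _).const_sub _

lemma differentiableOn_E4 : DifferentiableOn ℂ E4 upperHalfPlaneSet := by
  rw [funext E4_eq_sigmaSeries]
  exact ((differentiableOn_qParam_mul_sigmaSeries 3).const_mul _).const_add _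

lemma differentiableOn_E6 : DifferentiableOn ℂ E6 upperHalfPlaneSet := by
  rw [funext E6_eq_sigmaSeries]
  exact ((differentiableOn_qParam_mul_sigmaSeries 5).const_mul _).const_sub _

/-! ### Behaviour at the cusp `i∞` -/

lemma tendsto_qParam_one_imInfty : Tendsto 𝕢 I∞ (𝓝 0) :=
  (Periodic.qParam_tendsto one_pos).mono_right nhdsWithin_le_nhds

lemma tendsto_sigmaSeries_imInfty (k : ℕ) :
    Tendsto (fun z ↦ sigmaSeries k (𝕢 z)) I∞ (𝓝 1) := by
  have h := ((differentiableOn_sigmaSeries k).differentiableAt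
    (Metric.ball_mem_nhds 0 one_pos)).continuousAt.tendsto
  rw [sigmaSeries_zero] at h
  exact h.comp tendsto_qParam_one_imInfty

lemma tendsto_E4_imInfty : Tendsto E4 I∞ (𝓝 1) := by
  rw [funext E4_eq_sigmaSeries]
  simpa using ((tendsto_qParam_one_imInfty.mul (tendsto_sigmaSeries_imInfty 3)).const_mul
    (240 : ℂ)).const_add 1

lemma tendsto_E4_mul_E2_sub_E6_div_qParam_imInfty :
    Tendsto (fun z ↦ (E4 z * E2 z - E6 z) / 𝕢 z) I∞ (𝓝 720) := by
  have hq := tendsto_qParam_one_imInfty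
  have h1 := tendsto_sigmaSeries_imInfty 1
  have h3 := tendsto_sigmaSeries_imInfty 3
  have h5 := tendsto_sigmaSeries_imInfty 5
  convert (((h3.const_mul 240).sub (h1.const_mul 24)).add (h5.const_mul 504)).sub
    (((hq.const_mul 5760).mul h1).mul h3) using 2 with z
  · rw [div_eq_iff (Periodic.qParam_ne_zero z), E2_eq_sigmaSeries, E4_eq_sigmaSeries,
      E6_eq_sigmaSeries]
    ring
  · norm_num

lemma tendsto_E4_pow_sub_E6_pow_div_qParam_imInfty :
    Tendsto (fun z ↦ (E4 z ^ 3 - E6 z ^ 2) / 𝕢 z) I∞ (𝓝 1728) := by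
  have hq := tendsto_qParam_one_imInfty
  have h3 := tendsto_sigmaSeries_imInfty 3
  have h5 := tendsto_sigmaSeries_imInfty 5
  convert ((((h3.const_mul 720).add ((hq.const_mul 172800).mul (h3.pow 2))).add
    (((hq.pow 2).const_mul 13824000).mul (h3.pow 3))).add (h5.const_mul 1008)).sub
    ((hq.const_mul 254016).mul (h5.pow 2)) using 2 with z
  · rw [div_eq_iff (Periodic.qParam_ne_zero z), E4_eq_sigmaSeries, E6_eq_sigmaSeries]
    ring
  · norm_num

/-! ### The transformation under `z ↦ -1 / z` -/

lemma E2_coe (z : ℍ) : E2 z = EisensteinSeries.E2 z := by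
  rw [EisensteinSeries.E2_eq_tsum_cexp, E2]
  congr! 4 with n
  rw [← exp_nat_mul]
  ring_nf

lemma E4_coe (z : ℍ) : E4 z = ModularForm.E₄ z := by
  have h4 : bernoulli 4 = -1 / 30 := by decide +kernel
  rw [EisensteinSeries.q_expansion_bernoulli _ (by decide), E4, h4]
  norm_num
  congr! 2 with n
  rw [← exp_nat_mul]
  ring_nf

lemma E6_coe (z : ℍ) : E6 z = ModularForm.E₆ z := by
  have h6 : bernoulli 6 = 1 / 42 := by decide +kernel
  rw [EisensteinSeries.q_expansion_bernoulli _ (by decide), E6, h6]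
  norm_num
  congr! 2 with n
  rw [← exp_nat_mul]
  ring_nf

lemma E4_pow_sub_E6_pow_ne_zero {z : ℂ} (hz : 0 < z.im) : E4 z ^ 3 - E6 z ^ 2 ≠ 0 := by
  lift z to ℍ using hz
  have h := ModularForm.discriminant_ne_zero z
  rw [ModularForm.discriminant_eq_E₄_cube_sub_E₆_sq, ← E4_coe, ← E6_coe] at h
  exact fun h0 ↦ h (by simp [h0])

lemma coe_modular_S_smul (z : ℍ) : ((ModularGroup.S • z : ℍ) : ℂ) = -1 / z := by
  rw [UpperHalfPlane.modular_S_smul]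
  simp [neg_div, inv_neg]

lemma im_neg_one_div_pos {z : ℂ} (hz : 0 < z.im) : 0 < (-1 / z).im := by
  lift z to ℍ using hz
  rw [← coe_modular_S_smul]
  exact UpperHalfPlane.im_pos _

lemma slashInvariantForm_modular_S_smul {F : Type*} {k : ℤ} [FunLike F ℍ ℂ]
    [SlashInvariantFormClass F 𝒮ℒ k] (f : F) (z : ℍ) :
    f (ModularGroup.S • z) = (z : ℂ) ^ k * f z := by
  have h := SlashInvariantForm.slash_action_eqn'' (Γ := 𝒮ℒ) f
    (γ := Matrix.SpecialLinearGroup.mapGL ℝ ModularGroup.S) ⟨_, rfl⟩ z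
  rwa [← ModularGroup.denom_S z]

lemma E4_neg_one_div {z : ℂ} (hz : 0 < z.im) : E4 (-1 / z) = z ^ 4 * E4 z := by
  lift z to ℍ using hz
  rw [← coe_modular_S_smul, E4_coe, E4_coe, slashInvariantForm_modular_S_smul]
  norm_cast

lemma E6_neg_one_div {z : ℂ} (hz : 0 < z.im) : E6 (-1 / z) = z ^ 6 * E6 z := by
  lift z to ℍ using hz
  rw [← coe_modular_S_smul, E6_coe, E6_coe, slashInvariantForm_modular_S_smul]
  norm_cast

lemma E2_neg_one_div {z : ℂ} (hz : 0 < z.im) :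
    E2 (-1 / z) = z ^ 2 * E2 z - 6 * I / π * z := by
  lift z to ℍ using hz
  have hz : (z : ℂ) ≠ 0 := z.ne_zero
  have hπ : (π : ℂ) ≠ 0 := ofReal_ne_zero.mpr Real.pi_ne_zero
  rw [← coe_modular_S_smul, E2_coe, E2_coe]
  simp only [EisensteinSeries.E2, Pi.smul_apply, riemannZeta_two, smul_eq_mul]
  rw [EisensteinSeries.G2_S_transform z]
  field_simp
  ring_nf

lemma phi0_eq_sq_div {z : ℂ} (hz : 0 < z.im) :
    phi0 z = 1728 * (E4 z * E2 z - E6 z) ^ 2 / (E4 z ^ 3 - E6 z ^ 2) := by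
  have hD := E4_pow_sub_E6_pow_ne_zero hz
  simp only [phi0, varphim4, varphim2, jInv]
  field_simp
  ring

lemma phim2_eq_div (z : ℂ) :
    phim2 z = 1728 * E4 z * (E4 z * E2 z - E6 z) / (E4 z ^ 3 - E6 z ^ 2) := by
  simp only [phim2, varphim4, varphim2]
  ring

/-- The function `z ↦ φ₀(-1/z) z²`, i.e. the weight `-2` slash of `φ₀` by `S`. -/
noncomputable def phi0SlashS (z : ℂ) : ℂ :=
  phi0 (-1 / z) * z ^ 2

lemma phi0SlashS_eq {z : ℂ} (hz : 0 < z.im) :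
    phi0SlashS z = z ^ 2 * phi0 z - 12 * I / π * z * phim2 z - 36 / π ^ 2 * phim4 z := by
  have hD := E4_pow_sub_E6_pow_ne_zero hz
  have hz0 : z ≠ 0 := ne_of_apply_ne im (ne_of_gt hz)
  have hπ : (π : ℂ) ≠ 0 := ofReal_ne_zero.mpr Real.pi_ne_zero
  have hnum : E4 (-1 / z) * E2 (-1 / z) - E6 (-1 / z) =
      z ^ 6 * (E4 z * E2 z - E6 z) - 6 * I / π * z ^ 5 * E4 z := by
    rw [E2_neg_one_div hz, E4_neg_one_div hz, E6_neg_one_div hz]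
    ring
  have hden : E4 (-1 / z) ^ 3 - E6 (-1 / z) ^ 2 = z ^ 12 * (E4 z ^ 3 - E6 z ^ 2) := by
    rw [E4_neg_one_div hz, E6_neg_one_div hz]
    ring
  rw [phi0SlashS, phi0_eq_sq_div (im_neg_one_div_pos hz), hnum, hden, phi0_eq_sq_div hz,
    phim2_eq_div, phim4, varphim4]
  field_simp
  ring_nf
  rw [I_sq]
  ring

lemma phi0SlashS_sub_phi0SlashS_sub_one {z : ℂ} (hz : 0 < z.im) :
    phi0SlashS z - phi0SlashS (z - 1) = (2 * z - 1) * phi0 z - 12 * I / π * phim2 z := by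
  rw [phi0SlashS_eq hz, phi0SlashS_eq (z := z - 1) (by simpa using hz),
    periodic_phi0.sub_eq, periodic_phim2.sub_eq, periodic_phim4.sub_eq]
  ring

lemma phi0SlashS_second_difference {z : ℂ} (hz : 0 < z.im) :
    phi0SlashS (z + 1) - 2 * phi0SlashS z + phi0SlashS (z - 1) = 2 * phi0 z := by
  have h := phi0SlashS_sub_phi0SlashS_sub_one (z := z + 1) (by simpa using hz)
  rw [add_sub_cancel_right, periodic_phi0 z, periodic_phim2 z] at h
  linear_combination h - phi0SlashS_sub_phi0SlashS_sub_one hz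

lemma differentiableOn_phi0 : DifferentiableOn ℂ phi0 upperHalfPlaneSet := by
  refine DifferentiableOn.congr (f := fun z ↦
    1728 * (E4 z * E2 z - E6 z) ^ 2 / (E4 z ^ 3 - E6 z ^ 2)) ?_ fun z hz ↦ phi0_eq_sq_div hz
  have h2 := differentiableOn_E2
  have h4 := differentiableOn_E4
  have h6 := differentiableOn_E6
  exact ((((h4.mul h2).sub h6).pow 2).const_mul _).div ((h4.pow 3).sub (h6.pow 2))
    fun z hz ↦ E4_pow_sub_E6_pow_ne_zero hz

lemma differentiableOn_phi0SlashS : DifferentiableOn ℂ phi0SlashS upperHalfPlaneSet := by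
  refine (differentiableOn_phi0.comp (f := fun z ↦ -1 / z) ?_ fun z hz ↦
    im_neg_one_div_pos hz).mul (by fun_prop)
  exact (differentiableOn_const _).div differentiableOn_id fun z hz ↦
    ne_of_apply_ne im (ne_of_gt hz)

/-! ### Growth of `φ₀`, `φ₋₂`, `φ₋₄` at the cusp -/

lemma eventually_im_pos_imInfty : ∀ᶠ z in I∞, 0 < z.im :=
  tendsto_comap.eventually_gt_atTop 0

lemma tendsto_phi0_div_qParam_imInfty :
    Tendsto (fun z ↦ phi0 z / 𝕢 z) I∞ (𝓝 518400) := by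
  have h : Tendsto _ I∞ (𝓝 _) := ((tendsto_E4_mul_E2_sub_E6_div_qParam_imInfty.pow 2).const_mul
    1728).div tendsto_E4_pow_sub_E6_pow_div_qParam_imInfty (by norm_num)
  rw [show (518400 : ℂ) = 1728 * 720 ^ 2 / 1728 by norm_num]
  refine h.congr' ?_
  filter_upwards [eventually_im_pos_imInfty] with z hz
  have hD := E4_pow_sub_E6_pow_ne_zero hz
  have hq : 𝕢 z ≠ 0 := Periodic.qParam_ne_zero z
  simp only [Pi.div_apply, phi0_eq_sq_div hz]
  field_simp

lemma tendsto_phim2_imInfty : Tendsto phim2 I∞ (𝓝 720) := by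
  have h : Tendsto _ I∞ (𝓝 _) := ((tendsto_E4_imInfty.const_mul 1728).mul
    tendsto_E4_mul_E2_sub_E6_div_qParam_imInfty).div
    tendsto_E4_pow_sub_E6_pow_div_qParam_imInfty (by norm_num)
  rw [show (720 : ℂ) = 1728 * 1 * 720 / 1728 by norm_num]
  refine h.congr fun z ↦ ?_
  have hq : 𝕢 z ≠ 0 := Periodic.qParam_ne_zero z
  simp only [Pi.div_apply, phim2_eq_div]
  field_simp

lemma tendsto_qParam_mul_phim4_imInfty :
    Tendsto (fun z ↦ 𝕢 z * phim4 z) I∞ (𝓝 1) := by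
  have h : Tendsto _ I∞ (𝓝 _) := ((tendsto_E4_imInfty.pow 2).const_mul 1728).div
    tendsto_E4_pow_sub_E6_pow_div_qParam_imInfty (by norm_num)
  rw [show (1 : ℂ) = 1728 * 1 ^ 2 / 1728 by norm_num]
  refine h.congr fun z ↦ ?_
  simp only [Pi.div_apply, phim4, varphim4, div_div_eq_mul_div]
  ring

lemma phi0_isBigO_qParam : phi0 =O[I∞] 𝕢 :=
  isBigO_of_div_tendsto_nhds (.of_forall fun z hz ↦ (Periodic.qParam_ne_zero z hz).elim) _
    tendsto_phi0_div_qParam_imInfty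

/-! ### The cone at the cusp `0` -/

/-- The closed cone `|re w| ≤ im w` with apex at the cusp `0`. All contours of the theorem, moved
to start at `0`, lie in it, and `phi0SlashS` is differentiable on it up to the apex. -/
def cuspCone : Set ℂ := {w | |w.re| ≤ w.im}

lemma mem_cuspCone {w : ℂ} : w ∈ cuspCone ↔ |w.re| ≤ w.im := Iff.rfl

lemma convex_cuspCone : Convex ℝ cuspCone := by
  intro x hx y hy a b ha hb _
  rw [mem_cuspCone, abs_le] at *
  simp only [add_re, add_im, real_smul, re_ofReal_mul, im_ofReal_mul]
  constructor <;> nlinarith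

lemma zero_mem_cuspCone : (0 : ℂ) ∈ cuspCone := by simp [mem_cuspCone]

lemma im_pos_of_mem_cuspCone {w : ℂ} (hw : w ∈ cuspCone) (h0 : w ≠ 0) : 0 < w.im := by
  refine ((abs_nonneg _).trans hw).lt_of_ne fun him ↦ h0 ?_
  rw [mem_cuspCone, ← him, abs_nonpos_iff] at hw
  exact Complex.ext hw him.symm

lemma tendsto_neg_one_div_cuspCone :
    Tendsto (fun w : ℂ ↦ -1 / w) (𝓝[cuspCone \ {0}] 0) I∞ := by
  have hnorm : Tendsto (fun w : ℂ ↦ ‖w‖⁻¹ / 2) (𝓝[cuspCone \ {0}] 0) atTop :=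
    ((tendsto_inv_nhdsGT_zero.comp tendsto_norm_nhdsNE_zero).atTop_div_const two_pos).mono_left
      (nhdsWithin_mono _ fun w hw ↦ hw.2)
  refine tendsto_comap_iff.mpr (tendsto_atTop_mono' _ ?_ hnorm)
  filter_upwards [self_mem_nhdsWithin] with w ⟨hw, hw0⟩
  have hpos : 0 < ‖w‖ := norm_pos_iff.mpr hw0
  have hle : ‖w‖ ≤ 2 * w.im := by
    linarith [norm_le_abs_re_add_abs_im w, mem_cuspCone.mp hw,
      abs_of_pos (im_pos_of_mem_cuspCone hw hw0)]
  calc ‖w‖⁻¹ / 2 = ‖w‖ / 2 / ‖w‖ ^ 2 := by field_simp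
    _ ≤ w.im / ‖w‖ ^ 2 := by gcongr; linarith
    _ = (-1 / w).im := by simp [normSq_eq_norm_sq, neg_div]

lemma phi0SlashS_isBigO_cuspCone : phi0SlashS =O[𝓝[cuspCone] 0] fun w ↦ ‖w - 0‖ ^ 2 := by
  have hphi : phi0 =O[I∞] fun _ ↦ (1 : ℝ) :=
    phi0_isBigO_qParam.trans (tendsto_qParam_one_imInfty.isBigO_one ℝ)
  rw [← insert_sdiff_self_of_mem zero_mem_cuspCone, nhdsWithin_insert, isBigO_sup]
  refine ⟨isBigO_pure.mpr (by simp [phi0SlashS]), ?_⟩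
  exact ((hphi.comp_tendsto tendsto_neg_one_div_cuspCone).mul
    ((isBigO_refl (fun w : ℂ ↦ w) _).norm_right.pow 2)).congr (fun _ ↦ rfl) fun w ↦ by simp

lemma differentiableOn_phi0SlashS_cuspCone : DifferentiableOn ℂ phi0SlashS cuspCone := by
  intro w hw
  by_cases h0 : w = 0
  · subst h0
    exact (phi0SlashS_isBigO_cuspCone.hasFDerivWithinAt hw one_lt_two).differentiableWithinAt
  · exact (differentiableOn_phi0SlashS.differentiableAt (isOpen_upperHalfPlaneSet.mem_nhds
      (im_pos_of_mem_cuspCone hw h0))).differentiableWithinAt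

/-! ### Contour integrals and primitives -/

lemma segInt_eq_sub_of_hasDerivWithinAt {s : Set ℂ} {F f : ℂ → ℂ} {a b : ℂ} (hs : Convex ℝ s)
    (hF : ∀ z ∈ s, HasDerivWithinAt F (f z) s z) (hf : ContinuousOn f s) (ha : a ∈ s)
    (hb : b ∈ s) : segInt a b f = F b - F a := by
  let γ : ℝ → ℂ := fun t ↦ a + t * (b - a)
  have hγ (t : ℝ) : HasDerivAt γ (b - a) t := by
    have h := ((ofRealCLM.hasDerivAt (x := t)).mul_const (b - a)).const_add a
    rwa [ofRealCLM_apply, ofReal_one, one_mul] at h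
  have hmaps : MapsTo γ (Icc 0 1) s := fun t ht ↦ by
    simpa [γ] using hs.add_smul_sub_mem ha hb ht
  have hFγ (t : ℝ) (ht : t ∈ Icc (0 : ℝ) 1) :
      HasDerivWithinAt (F ∘ γ) ((b - a) * f (γ t)) (Icc 0 1) t :=
    (hF _ (hmaps ht)).scomp t (hγ t).hasDerivWithinAt hmaps
  have hfγ : ContinuousOn (fun t ↦ (b - a) * f (γ t)) (Icc 0 1) :=
    continuousOn_const.mul (hf.comp (fun t _ ↦ (hγ t).continuousAt.continuousWithinAt) hmaps)
  rw [segInt, ← intervalIntegral.integral_const_mul,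
    intervalIntegral.integral_eq_sub_of_hasDerivAt_of_le (f := F ∘ γ) zero_le_one
      (fun t ht ↦ (hFγ t ht).continuousWithinAt)
      (fun t ht ↦ (hFγ t (Ioo_subset_Icc_self ht)).hasDerivAt (Icc_mem_nhds ht.1 ht.2))
      (hfγ.intervalIntegrable_of_Icc zero_le_one)]
  simp [γ]

lemma rayIntFrom_eq_sub_of_hasDerivWithinAt {s : Set ℂ} {F f : ℂ → ℂ} {c : ℝ} {l : ℂ}
    (hs : ∀ t : ℝ, c ≤ t → I * t ∈ s) (hF : ∀ z ∈ s, HasDerivWithinAt F (f z) s z)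
    (hf : IntegrableOn (fun t : ℝ ↦ f (I * t)) (Ioi c))
    (hl : Tendsto (fun t : ℝ ↦ F (I * t)) atTop (𝓝 l)) :
    rayIntFrom c f = l - F (I * c) := by
  have hγ (t : ℝ) : HasDerivAt (fun t : ℝ ↦ I * (t : ℂ)) I t := by
    simpa using (ofRealCLM.hasDerivAt (x := t)).const_mul I
  have hFγ (t : ℝ) (ht : t ∈ Ici c) :
      HasDerivWithinAt (fun t : ℝ ↦ F (I * t)) (I * f (I * t)) (Ici c) t :=
    (hF _ (hs t ht)).scomp t (hγ t).hasDerivWithinAt hs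
  rw [rayIntFrom, ← integral_const_mul]
  exact integral_Ioi_of_hasDerivAt_of_tendsto (hFγ c self_mem_Ici).continuousWithinAt
    (fun t ht ↦ (hFγ t (Ioi_subset_Ici_self ht)).hasDerivAt (Ici_mem_nhds ht)) (hf.const_mul I) hl

lemma segInt_comp_add_right (a b c : ℂ) (f : ℂ → ℂ) :
    segInt a b (fun z ↦ f (z + c)) = segInt (a + c) (b + c) f := by
  simp only [segInt, add_sub_add_right_eq_sub, add_right_comm]

/-- The filter of points of the strip `0 ≤ re z ≤ 1` going to `i∞`. -/
def stripImInfty : Filter ℂ := I∞ ⊓ 𝓟 (re ⁻¹' Icc 0 1)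

lemma stripImInfty_le_imInfty : stripImInfty ≤ I∞ := inf_le_left

lemma tendsto_sub_of_hasDerivWithinAt_strip {s : Set ℂ} {F f : ℂ → ℂ} {c : ℂ}
    (hs : ∀ᶠ z in stripImInfty, z ∈ s) (hF : ∀ z ∈ s, HasDerivWithinAt F (f z) s z)
    (hf : Tendsto f stripImInfty (𝓝 c)) :
    Tendsto (fun t : ℝ ↦ F (I * t + 1) - F (I * t)) atTop (𝓝 c) := by
  refine Metric.tendsto_atTop.mpr fun ε hε ↦ ?_
  have hclose := hs.and (hf (Metric.closedBall_mem_nhds c (half_pos hε)))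
  obtain ⟨T, -, hT⟩ :=
    ((atTop_basis.comap im).inf_principal (re ⁻¹' Icc 0 1)).eventually_iff.mp hclose
  refine ⟨T, fun t ht ↦ ?_⟩
  let s' : Set ℂ := Icc 0 1 ×ℂ {t}
  have hs' (z : ℂ) (hz : z ∈ s') : z ∈ s ∧ f z ∈ Metric.closedBall c (ε / 2) := by
    rw [mem_reProdIm] at hz
    exact hT ⟨by simpa [hz.2.symm] using ht, hz.1⟩
  have hderiv (z : ℂ) (hz : z ∈ s') :
      HasDerivWithinAt (fun z ↦ F z - c * z) (f z - c * 1) s' z :=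
    ((hF z (hs' z hz).1).mono fun w hw ↦ (hs' w hw).1).sub
      ((hasDerivWithinAt_id z s').const_mul c)
  have hbound (z : ℂ) (hz : z ∈ s') : ‖f z - c * 1‖ ≤ ε / 2 := by
    simpa using mem_closedBall_iff_norm.mp (hs' z hz).2
  have hconv : Convex ℝ s' :=
    ((convex_Icc 0 1).linear_preimage reLm).inter ((convex_singleton t).linear_preimage imLm)
  have hmvt := hconv.norm_image_sub_le_of_norm_hasDerivWithin_le hderiv hbound
    (x := I * t) (y := I * t + 1) (by simp [s', mem_reProdIm]) (by simp [s', mem_reProdIm])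
  rw [dist_eq_norm]
  calc ‖F (I * t + 1) - F (I * t) - c‖
      = ‖F (I * t + 1) - c * (I * t + 1) - (F (I * t) - c * (I * t))‖ := by ring_nf
    _ ≤ ε / 2 := by simpa using hmvt
    _ < ε := half_lt_self hε

/-- The integral of a weight `g` over the contour of Viazovska's `+1`-eigenfunction, with kernel
`f` on the three finite segments and `φ` on the vertical ray. -/
noncomputable def contourSum (f φ g : ℂ → ℂ) : ℂ :=
  segInt (-1) I (fun z ↦ f (z + 1) * g z) + segInt 1 I (fun z ↦ f (z - 1) * g z)
    - 2 * segInt 0 I (fun z ↦ f z * g z) + 2 * rayIntFrom 1 (fun z ↦ φ z * g z)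

lemma hasDerivWithinAt_comp_add_right {s t : Set ℂ} {F : ℂ → ℂ} {F' z c : ℂ}
    (hF : HasDerivWithinAt F F' t (z + c)) (h : MapsTo (· + c) s t) :
    HasDerivWithinAt (fun w ↦ F (w + c)) F' s z :=
  (hF.comp z ((hasDerivAt_id z).add_const c).hasDerivWithinAt h).congr_deriv (mul_one _)

lemma mem_cuspCone_of_add_one_of_sub_one {z : ℂ} (h₁ : z + 1 ∈ cuspCone)
    (h₂ : z + -1 ∈ cuspCone) : z ∈ cuspCone := by
  simp only [mem_cuspCone, abs_le, add_re, add_im, one_re, one_im, neg_re, neg_im] at *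
  constructor <;> linarith

lemma eventually_stripImInfty_mem_cuspCone :
    ∀ᶠ w in stripImInfty, w ∈ cuspCone ∧ w + -1 ∈ cuspCone := by
  filter_upwards [stripImInfty_le_imInfty (tendsto_comap.eventually_ge_atTop 1),
    mem_inf_of_right (mem_principal_self _)] with w him ⟨hre0, hre1⟩
  simp only [mem_cuspCone, abs_le, add_re, add_im, neg_re, neg_im, one_re, one_im]
  refine ⟨⟨?_, ?_⟩, ?_, ?_⟩ <;> linarith

lemma segInt_add_segInt_sub_segInt_eq {f g F G H : ℂ → ℂ} (hf : ContinuousOn f cuspCone)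
    (hg : Continuous g)
    (hF : ∀ w ∈ cuspCone, HasDerivWithinAt F (f w * g (w - 1)) cuspCone w)
    (hG : ∀ w ∈ cuspCone, HasDerivWithinAt G (f w * g (w + 1)) cuspCone w)
    (hH : ∀ w ∈ cuspCone, HasDerivWithinAt H (f w * g w) cuspCone w)
    (h0 : F 0 + G 0 = 2 * H 0) :
    segInt (-1) I (fun z ↦ f (z + 1) * g z) + segInt 1 I (fun z ↦ f (z - 1) * g z)
      - 2 * segInt 0 I (fun z ↦ f z * g z) = F (I + 1) + G (I - 1) - 2 * H I := by
  have hleft := segInt_comp_add_right (-1) I 1 fun w ↦ f w * g (w - 1)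
  have hright := segInt_comp_add_right 1 I (-1) fun w ↦ f w * g (w + 1)
  simp only [add_sub_cancel_right, neg_add_cancel] at hleft
  simp only [← sub_eq_add_neg, sub_add_cancel, sub_self] at hright
  rw [hleft, hright,
    segInt_eq_sub_of_hasDerivWithinAt convex_cuspCone hF (hf.mul (by fun_prop))
      zero_mem_cuspCone (by simp [mem_cuspCone]),
    segInt_eq_sub_of_hasDerivWithinAt convex_cuspCone hG (hf.mul (by fun_prop))
      zero_mem_cuspCone (by simp [mem_cuspCone]),
    segInt_eq_sub_of_hasDerivWithinAt convex_cuspCone hH (hf.mul (by fun_prop))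
      zero_mem_cuspCone (by simp [mem_cuspCone])]
  linear_combination -h0

theorem contourSum_eq_of_tendsto {f φ g : ℂ → ℂ} {c : ℂ} (hf : DifferentiableOn ℂ f cuspCone)
    (hg : Differentiable ℂ g) (hg_diff : ∀ z, g (z + 1) - 2 * g z + g (z - 1) = 0)
    (hf_diff : ∀ z, z + 1 ∈ cuspCone → z + -1 ∈ cuspCone →
      f (z + 1) - 2 * f z + f (z - 1) = 2 * φ z)
    (hint : IntegrableOn (fun t : ℝ ↦ φ (I * t) * g (I * t)) (Ioi 1))
    (hlim : Tendsto (fun w ↦ f w * g (w - 1) - f (w - 1) * g w) stripImInfty (𝓝 c)) :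
    contourSum f φ g = c := by
  obtain ⟨F, hF⟩ := convex_cuspCone.exists_forall_hasDerivWithinAt
    (f := fun w ↦ f w * g (w - 1)) (hf.mul (by fun_prop))
  obtain ⟨H, hH⟩ := convex_cuspCone.exists_forall_hasDerivWithinAt
    (f := fun w ↦ f w * g w) (hf.mul (by fun_prop))
  let G : ℂ → ℂ := fun w ↦ 2 * H w - F w
  have hG (w : ℂ) (hw : w ∈ cuspCone) :
      HasDerivWithinAt G (f w * g (w + 1)) cuspCone w := by
    refine (((hH w hw).const_mul 2).sub (hF w hw)).congr_deriv ?_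
    linear_combination -f w * hg_diff w
  let P : ℂ → ℂ := fun z ↦ F (z + 1) + G (z + -1) - 2 * H z
  have hP (z : ℂ) (hz : z ∈ {z : ℂ | z + 1 ∈ cuspCone ∧ z + -1 ∈ cuspCone}) :
      HasDerivWithinAt P (2 * (φ z * g z)) {z | z + 1 ∈ cuspCone ∧ z + -1 ∈ cuspCone} z := by
    refine (((hasDerivWithinAt_comp_add_right (hF _ hz.1) fun _ h ↦ h.1).add
      (hasDerivWithinAt_comp_add_right (hG _ hz.2) fun _ h ↦ h.2)).sub
      (((hH z (mem_cuspCone_of_add_one_of_sub_one hz.1 hz.2)).mono fun _ h ↦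
        mem_cuspCone_of_add_one_of_sub_one h.1 h.2).const_mul 2)).congr_deriv ?_
    rw [add_sub_cancel_right, neg_add_cancel_right, ← sub_eq_add_neg]
    linear_combination g z * hf_diff z hz.1 hz.2
  have hPlim : Tendsto (fun t : ℝ ↦ P (I * t)) atTop (𝓝 c) := by
    refine (tendsto_sub_of_hasDerivWithinAt_strip (F := fun w ↦ F w - G (w + -1))
      eventually_stripImInfty_mem_cuspCone (fun w hw ↦ ?_) hlim).congr fun t ↦ ?_
    · refine (((hF w hw.1).mono fun _ h ↦ h.1).sub
        (hasDerivWithinAt_comp_add_right (hG _ hw.2) fun _ h ↦ h.2)).congr_deriv ?_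
      rw [neg_add_cancel_right, ← sub_eq_add_neg]
    · simp only [P, G, add_neg_cancel_right]
      ring
  have hray := rayIntFrom_eq_sub_of_hasDerivWithinAt (c := 1) (fun t ht ↦ by
    simpa [mem_cuspCone] using ht) hP (hint.const_mul 2) hPlim
  rw [contourSum, segInt_add_segInt_sub_segInt_eq hf.continuousOn hg.continuous hF hG hH
    (by simp [G])]
  simp only [rayIntFrom, integral_const_mul, P, ofReal_one, mul_one, ← sub_eq_add_neg] at hray ⊢
  linear_combination hray

lemma tendsto_I_mul_ofReal_imInfty : Tendsto (fun t : ℝ ↦ I * (t : ℂ)) atTop I∞ :=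
  tendsto_comap_iff.mpr (tendsto_id.congr fun t ↦ by simp)

lemma integrableOn_phi0_mul_ray {g : ℂ → ℂ} (hg : Continuous g)
    (hgO : (fun t : ℝ ↦ g (I * t)) =O[atTop] Real.exp) :
    IntegrableOn (fun t : ℝ ↦ phi0 (I * t) * g (I * t)) (Ioi 1) := by
  have hq : (fun t : ℝ ↦ 𝕢 (I * t)) =O[atTop] fun t ↦ rexp (-2 * π * t) :=
    .of_norm_le fun t ↦ by simp [Periodic.norm_qParam]
  have hbound : (fun t : ℝ ↦ phi0 (I * t) * g (I * t)) =O[atTop]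
      fun t ↦ rexp (-(2 * π - 1) * t) :=
    (((phi0_isBigO_qParam.comp_tendsto tendsto_I_mul_ofReal_imInfty).trans hq).mul
      hgO).congr_right fun t ↦ by
        rw [← Real.exp_add]
        ring_nf
  have hcont : ContinuousOn (fun t : ℝ ↦ phi0 (I * t) * g (I * t)) (Ici 1) := by
    refine (differentiableOn_phi0.continuousOn.comp (by fun_prop) fun t ht ↦ ?_).mul
      (by fun_prop)
    simpa [upperHalfPlaneSet] using zero_lt_one.trans_le ht
  exact ((hcont.locallyIntegrableOn measurableSet_Ici).integrableOn_of_isBigO_atTop hbound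
    ⟨Ioi 1, Ioi_mem_atTop 1, exp_neg_integrableOn_Ioi 1 (by linarith [Real.pi_gt_three])⟩).mono_set
    Ioi_subset_Ici_self

theorem contourSum_phi0_eq_of_tendsto {g : ℂ → ℂ} {c : ℂ} (hg : Differentiable ℂ g)
    (hg_diff : ∀ z, g (z + 1) - 2 * g z + g (z - 1) = 0)
    (hgO : (fun t : ℝ ↦ g (I * t)) =O[atTop] Real.exp)
    (hlim : Tendsto (fun w ↦ phi0SlashS w * g (w - 1) - phi0SlashS (w - 1) * g w) stripImInfty
      (𝓝 c)) :
    contourSum phi0SlashS phi0 g = c := by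
  refine contourSum_eq_of_tendsto differentiableOn_phi0SlashS_cuspCone hg hg_diff
    (fun z h₁ h₂ ↦ phi0SlashS_second_difference ?_) (integrableOn_phi0_mul_ray hg.continuous hgO)
    hlim
  simp only [mem_cuspCone, abs_le, add_re, add_im, one_re, one_im, neg_re, neg_im] at h₁ h₂
  linarith

/-! ### Limits in the strip -/

lemma tendsto_mul_qParam_strip : Tendsto (fun w ↦ w * 𝕢 w) stripImInfty (𝓝 0) := by
  have hreal : Tendsto (fun y : ℝ ↦ y ^ 0 * rexp (-y) + y ^ 1 * rexp (-y)) atTop (𝓝 0) := by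
    simpa only [add_zero] using (Real.tendsto_pow_mul_exp_neg_atTop_nhds_zero 0).add
      (Real.tendsto_pow_mul_exp_neg_atTop_nhds_zero 1)
  refine squeeze_zero_norm' ?_ (hreal.comp (tendsto_comap.mono_left stripImInfty_le_imInfty))
  filter_upwards [stripImInfty_le_imInfty eventually_im_pos_imInfty,
    mem_inf_of_right (mem_principal_self _)] with w him ⟨hre0, hre1⟩
  have hw : ‖w‖ ≤ 1 + w.im := (norm_le_abs_re_add_abs_im w).trans (by
    rw [abs_of_nonneg hre0, abs_of_pos him]
    gcongr)
  calc ‖w * 𝕢 w‖ = ‖w‖ * rexp (-2 * π * w.im) := by simp [Periodic.norm_qParam]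
    _ ≤ (1 + w.im) * rexp (-w.im) := by
        gcongr
        nlinarith [Real.pi_gt_three]
    _ = _ := by simp [add_mul]

lemma tendsto_phi0SlashS_sub_strip :
    Tendsto (fun w ↦ phi0SlashS w - phi0SlashS (w - 1)) stripImInfty (𝓝 (-8640 * I / π)) := by
  have hwq := tendsto_mul_qParam_strip
  have hq := tendsto_qParam_one_imInfty.mono_left stripImInfty_le_imInfty
  have h0 := tendsto_phi0_div_qParam_imInfty.mono_left stripImInfty_le_imInfty
  have h2 := tendsto_phim2_imInfty.mono_left stripImInfty_le_imInfty
  have h := (((hwq.const_mul 2).sub hq).mul h0).sub (h2.const_mul (12 * I / π))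
  rw [show (2 * 0 - 0) * 518400 - 12 * I / π * 720 = -8640 * I / (π : ℂ) by ring] at h
  refine h.congr' ?_
  filter_upwards [stripImInfty_le_imInfty eventually_im_pos_imInfty] with w hw
  have hq0 : 𝕢 w ≠ 0 := Periodic.qParam_ne_zero w
  rw [phi0SlashS_sub_phi0SlashS_sub_one hw]
  field_simp

lemma tendsto_qParam_mul_phi0SlashS_strip :
    Tendsto (fun w ↦ 𝕢 w * phi0SlashS w) stripImInfty (𝓝 (-36 / π ^ 2)) := by
  have hwq := tendsto_mul_qParam_strip
  have h0 := tendsto_phi0_div_qParam_imInfty.mono_left stripImInfty_le_imInfty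
  have h2 := tendsto_phim2_imInfty.mono_left stripImInfty_le_imInfty
  have h4 := tendsto_qParam_mul_phim4_imInfty.mono_left stripImInfty_le_imInfty
  have h := (((hwq.pow 2).mul h0).sub ((hwq.const_mul (12 * I / π)).mul h2)).sub
    (h4.const_mul (36 / (π : ℂ) ^ 2))
  rw [show 0 ^ 2 * 518400 - 12 * I / π * 0 * 720 - 36 / π ^ 2 * 1 = -36 / (π : ℂ) ^ 2 by ring] at h
  refine h.congr' ?_
  filter_upwards [stripImInfty_le_imInfty eventually_im_pos_imInfty] with w hw
  have hq0 : 𝕢 w ≠ 0 := Periodic.qParam_ne_zero w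
  rw [phi0SlashS_eq hw]
  field_simp

/-! ### Special values of the contour integral -/

lemma isBigO_pow_ray (n : ℕ) : (fun t : ℝ ↦ (I * t) ^ n) =O[atTop] Real.exp :=
  .of_norm_left (by simpa using (Real.isLittleO_pow_exp_atTop (n := n)).isBigO.norm_left)

lemma isBigO_pow_mul_qParam_ray (n : ℕ) :
    (fun t : ℝ ↦ (I * t) ^ n * 𝕢 (I * t)) =O[atTop] Real.exp := by
  simpa using (isBigO_pow_ray n).mul
    ((tendsto_qParam_one_imInfty.comp tendsto_I_mul_ofReal_imInfty).isBigO_one ℝ)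

lemma contourSum_phi0_one : contourSum phi0SlashS phi0 (fun _ ↦ 1) = -8640 * I / π := by
  refine contourSum_phi0_eq_of_tendsto (by fun_prop) (fun _ ↦ by norm_num)
    (by simpa using isBigO_pow_ray 0) ?_
  simpa using tendsto_phi0SlashS_sub_strip

lemma contourSum_phi0_qParam : contourSum phi0SlashS phi0 𝕢 = 0 := by
  refine contourSum_phi0_eq_of_tendsto Periodic.differentiable_qParam (fun z ↦ ?_)
    (by simpa using isBigO_pow_mul_qParam_ray 0) ?_
  · rw [periodic_qParam_one, periodic_qParam_one.sub_eq]
    ring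
  · have h := (tendsto_qParam_one_imInfty.mono_left stripImInfty_le_imInfty).mul
      tendsto_phi0SlashS_sub_strip
    rw [zero_mul] at h
    refine h.congr fun w ↦ ?_
    rw [periodic_qParam_one.sub_eq]
    ring

lemma contourSum_phi0_mul_qParam (c : ℂ) :
    contourSum phi0SlashS phi0 (fun z ↦ c * z * 𝕢 z) = 36 * c / π ^ 2 := by
  refine contourSum_phi0_eq_of_tendsto
    ((differentiable_id.const_mul c).mul Periodic.differentiable_qParam) (fun z ↦ ?_) ?_ ?_
  · rw [periodic_qParam_one, periodic_qParam_one.sub_eq]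
    ring
  · simpa [mul_assoc] using (isBigO_pow_mul_qParam_ray 1).const_mul_left c
  · have h := ((tendsto_mul_qParam_strip.mul tendsto_phi0SlashS_sub_strip).sub
      tendsto_qParam_mul_phi0SlashS_strip).const_mul c
    rw [show c * (0 * (-8640 * I / π) - -36 / π ^ 2) = 36 * c / (π : ℂ) ^ 2 by ring] at h
    refine h.congr fun w ↦ ?_
    rw [periodic_qParam_one.sub_eq]
    ring

/-! ### Differentiation under the integral sign -/

/-- The Gaussian `e^{πi r² z}`, as a function of the modulus `z`: the weight against which `aRad r`
integrates. -/
noncomputable def gaussianWeight (r : ℝ) (z : ℂ) : ℂ := cexp ((π : ℂ) * I * (r : ℂ) ^ 2 * z)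

lemma aRad_eq_contourSum (r : ℝ) : aRad r = contourSum phi0SlashS phi0 (gaussianWeight r) := rfl

lemma gaussianWeight_zero : gaussianWeight 0 = fun _ ↦ 1 := by
  funext z
  simp [gaussianWeight]

lemma gaussianWeight_sqrt_two : gaussianWeight √2 = 𝕢 := by
  funext z
  have h : ((√2 : ℝ) : ℂ) ^ 2 = 2 := by norm_cast; simp
  rw [gaussianWeight, Periodic.qParam, h, ofReal_one, div_one]
  ring_nf

lemma continuous_gaussianWeight (r : ℝ) : Continuous (gaussianWeight r) := by
  unfold gaussianWeight
  fun_prop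

lemma norm_gaussianWeight_le_one (r : ℝ) {z : ℂ} (hz : 0 ≤ z.im) : ‖gaussianWeight r z‖ ≤ 1 := by
  have hre : ((π : ℂ) * I * (r : ℂ) ^ 2 * z).re = -(π * r ^ 2 * z.im) := by
    rw [← ofReal_pow, mul_right_comm (π : ℂ), ← ofReal_mul, mul_assoc, re_ofReal_mul, I_mul_re]
    ring
  rw [gaussianWeight, norm_exp, hre, Real.exp_le_one_iff, neg_nonpos]
  positivity

lemma hasDerivAt_gaussianWeight (r : ℝ) (z : ℂ) :
    HasDerivAt (fun s : ℝ ↦ gaussianWeight s z) (2 * π * I * r * z * gaussianWeight r z) r := by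
  have hsq : HasDerivAt (fun s : ℝ ↦ (s : ℂ) ^ 2) (2 * r) r := by
    simpa using (hasDerivAt_pow 2 (r : ℂ)).comp_ofReal
  refine ((hsq.const_mul (π * I)).mul_const z).cexp.congr_deriv ?_
  rw [gaussianWeight]
  ring

lemma hasDerivAt_integral_mul_gaussianWeight {α : Type*} [MeasurableSpace α] {μ : Measure α}
    {ψ γ : α → ℂ} (hγ : AEStronglyMeasurable γ μ) (him : ∀ᵐ x ∂μ, 0 ≤ (γ x).im)
    (hψ : Integrable ψ μ) (hψγ : Integrable (fun x ↦ ψ x * γ x) μ) (r : ℝ) :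
    HasDerivAt (fun s : ℝ ↦ ∫ x, ψ x * gaussianWeight s (γ x) ∂μ)
      (∫ x, ψ x * (2 * π * I * r * γ x * gaussianWeight r (γ x)) ∂μ) r := by
  have hmeas (s : ℝ) : AEStronglyMeasurable (fun x ↦ gaussianWeight s (γ x)) μ :=
    (continuous_gaussianWeight s).comp_aestronglyMeasurable hγ
  refine (hasDerivAt_integral_of_dominated_loc_of_deriv_le
    (F := fun s x ↦ ψ x * gaussianWeight s (γ x))
    (F' := fun s x ↦ ψ x * (2 * π * I * s * γ x * gaussianWeight s (γ x)))
    (bound := fun x ↦ 2 * π * (|r| + 1) * ‖ψ x * γ x‖)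
    (Metric.ball_mem_nhds r one_pos) (.of_forall fun s ↦ hψ.aestronglyMeasurable.mul (hmeas s)) ?_
    (hψ.aestronglyMeasurable.mul ((hγ.const_mul _).mul (hmeas r))) ?_ (hψγ.norm.const_mul _)
    (ae_of_all _ fun x s _ ↦ (hasDerivAt_gaussianWeight s (γ x)).const_mul (ψ x))).2
  · refine hψ.mono (hψ.aestronglyMeasurable.mul (hmeas r)) ?_
    filter_upwards [him] with x hx
    rw [norm_mul]
    exact mul_le_of_le_one_right (norm_nonneg _) (norm_gaussianWeight_le_one r hx)
  · filter_upwards [him] with x hx s hs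
    have hs' : |s| ≤ |r| + 1 := by
      linarith [abs_sub_abs_le_abs_sub s r, Real.dist_eq s r ▸ Metric.mem_ball.mp hs]
    calc ‖ψ x * (2 * π * I * s * γ x * gaussianWeight s (γ x))‖
        = 2 * π * |s| * ‖ψ x * γ x‖ * ‖gaussianWeight s (γ x)‖ := by
          simp [abs_of_pos Real.pi_pos]
          ring
      _ ≤ 2 * π * (|r| + 1) * ‖ψ x * γ x‖ * 1 := by
          gcongr
          exact norm_gaussianWeight_le_one s hx
      _ = 2 * π * (|r| + 1) * ‖ψ x * γ x‖ := mul_one _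

lemma hasDerivAt_segInt_mul_gaussianWeight {a b : ℂ} {ψ : ℂ → ℂ} (ha : 0 ≤ a.im) (hb : 0 ≤ b.im)
    (hψ : ContinuousOn ψ (segment ℝ a b)) (r : ℝ) :
    HasDerivAt (fun s : ℝ ↦ segInt a b fun z ↦ ψ z * gaussianWeight s z)
      (segInt a b fun z ↦ ψ z * (2 * π * I * r * z * gaussianWeight r z)) r := by
  simp only [segInt, intervalIntegral.integral_of_le zero_le_one]
  have hmem (t : ℝ) (ht : t ∈ Icc (0 : ℝ) 1) : a + t * (b - a) ∈ segment ℝ a b := by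
    simpa using (convex_segment a b).add_smul_sub_mem (left_mem_segment ℝ a b)
      (right_mem_segment ℝ a b) ht
  have hψγ : ContinuousOn (fun t : ℝ ↦ ψ (a + t * (b - a))) (Icc 0 1) :=
    hψ.comp (by fun_prop) hmem
  have hint {h : ℝ → ℂ} (hh : ContinuousOn h (Icc 0 1)) : IntegrableOn h (Ioc 0 1) :=
    hh.integrableOn_Icc.mono_set Ioc_subset_Icc_self
  refine (hasDerivAt_integral_mul_gaussianWeight (Continuous.aestronglyMeasurable (by fun_prop))
    (ae_restrict_of_forall_mem measurableSet_Ioc fun t ht ↦ ?_) (hint hψγ)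
    (hint (hψγ.mul (by fun_prop))) r).const_mul _
  exact (convex_halfSpace_im_ge 0).segment_subset ha hb (hmem t (Ioc_subset_Icc_self ht))

lemma hasDerivAt_rayIntFrom_mul_gaussianWeight {c : ℝ} {ψ : ℂ → ℂ} (hc : 0 ≤ c)
    (hψ : IntegrableOn (fun t : ℝ ↦ ψ (I * t)) (Ioi c))
    (hψz : IntegrableOn (fun t : ℝ ↦ ψ (I * t) * (I * t)) (Ioi c)) (r : ℝ) :
    HasDerivAt (fun s : ℝ ↦ rayIntFrom c fun z ↦ ψ z * gaussianWeight s z)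
      (rayIntFrom c fun z ↦ ψ z * (2 * π * I * r * z * gaussianWeight r z)) r := by
  refine (hasDerivAt_integral_mul_gaussianWeight (Continuous.aestronglyMeasurable (by fun_prop))
    (ae_restrict_of_forall_mem measurableSet_Ioi fun t ht ↦ ?_) hψ hψz r).const_mul I
  simpa using hc.trans (le_of_lt ht)

lemma continuousOn_phi0SlashS_comp_add_segment {a b c : ℂ} (ha : a + c ∈ cuspCone)
    (hb : b + c ∈ cuspCone) : ContinuousOn (fun z ↦ phi0SlashS (z + c)) (segment ℝ a b) :=
  differentiableOn_phi0SlashS_cuspCone.continuousOn.comp (by fun_prop)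
    ((convex_cuspCone.translate_preimage_left c).segment_subset ha hb)

theorem hasDerivAt_aRad (r : ℝ) :
    HasDerivAt aRad
      (contourSum phi0SlashS phi0 fun z ↦ 2 * π * I * r * z * gaussianWeight r z) r := by
  have hleft := hasDerivAt_segInt_mul_gaussianWeight (by simp) (by simp)
    (continuousOn_phi0SlashS_comp_add_segment (a := -1) (b := I) (c := 1)
      (by simp [mem_cuspCone]) (by simp [mem_cuspCone])) r
  have hright := hasDerivAt_segInt_mul_gaussianWeight (by simp) (by simp)
    (continuousOn_phi0SlashS_comp_add_segment (a := 1) (b := I) (c := -1)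
      (by simp [mem_cuspCone]) (by simp [mem_cuspCone])) r
  have hmid := hasDerivAt_segInt_mul_gaussianWeight (by simp) (by simp)
    (continuousOn_phi0SlashS_comp_add_segment (a := 0) (b := I) (c := 0)
      (by simp [mem_cuspCone]) (by simp [mem_cuspCone])) r
  have hphi0 : IntegrableOn (fun t : ℝ ↦ phi0 (I * t)) (Ioi 1) := by
    simpa using integrableOn_phi0_mul_ray (g := fun _ ↦ 1) continuous_const
      (by simpa using isBigO_pow_ray 0)
  have hray := hasDerivAt_rayIntFrom_mul_gaussianWeight zero_le_one hphi0
    (integrableOn_phi0_mul_ray continuous_id (by simpa using isBigO_pow_ray 1)) r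
  simp only [add_zero, ← sub_eq_add_neg] at hleft hright hmid
  exact ((hleft.add hright).sub (hmid.const_mul 2)).add (hray.const_mul 2)

end

/-- **Proposition 4.** Special values of the radial function `a`:
`a(0) = −8640i/π`, `a(√2) = 0`, and `a′(√2) = 72√2·i/π`. -/
theorem aRad_special_values :
    aRad 0 = -8640 * Complex.I / (Real.pi : ℂ) ∧
    aRad (Real.sqrt 2) = 0 ∧
    deriv aRad (Real.sqrt 2) = 72 * (Real.sqrt 2 : ℂ) * Complex.I / (Real.pi : ℂ) := by
  refine ⟨?_, ?_, ?_⟩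
  · rw [aRad_eq_contourSum, gaussianWeight_zero, contourSum_phi0_one]
  · rw [aRad_eq_contourSum, gaussianWeight_sqrt_two, contourSum_phi0_qParam]
  · have hpi : (Real.pi : ℂ) ≠ 0 := Complex.ofReal_ne_zero.mpr Real.pi_ne_zero
    rw [(hasDerivAt_aRad _).deriv, gaussianWeight_sqrt_two, contourSum_phi0_mul_qParam]
    field_simp
    norm_num
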